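/- arXiv:1811.11901 — 2 statements merged into one kernel-verified Lean document; each statement's English description precedes it below -/
import Mathlib

section
/- Let N be a normal subgroup of a finite group G. The number of distinct (pairwise non-isomorphic) G-modules obtained by inducing the irreducible complex N-modules up to G equals the number of conjugacy classes of G that are contained in N. -/
open CategoryTheory

/-- The induced character `Ind_N^G φ` of a class function `φ` of a subgroup `N ≤ G`. -/
noncomputable def inducedChar {G : Type} [Group G] [Fintype G] (N : Subgroup G)
    [DecidablePred fun g => g ∈ N] (φ : ↥N → ℂ) : G → ℂ :=
  fun g => (Fintype.card N : ℂ)⁻¹ *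
    ∑ x : G, if h : x⁻¹ * g * x ∈ N then φ ⟨x⁻¹ * g * x, h⟩ else 0

/-!
Write `⟨f, φ⟩` for `|G|⁻¹ ∑ g, f g * φ g⁻¹`. For irreducible characters `χ`, `ψ` of `N`, Frobenius
reciprocity gives `⟨Ind χ, Ind ψ⟩ = |N|⁻¹ * #{x : G | χ ∘ conj x = ψ}`. This vanishes unless `χ` and
`ψ` are conjugate under `G`, in which case `Ind χ = Ind ψ`, and for `χ = ψ` it is the index of `N`
in the inertia group of `χ`, which is invertible. So the distinct functions `Ind χ` form an
orthogonal family without isotropic vectors in the space of class functions of `G` supported on `N`.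
By Frobenius reciprocity again, and completeness of the irreducible characters of `N`, no nonzero
element of that space is orthogonal to all of them. Their number is therefore the dimension of the
space, which is the number of conjugacy classes contained in `N`.
-/

open Module
open scoped MonoidAlgebra

universe u v w

theorem card_eq_finrank_of_isOrthoᵢ {K V ι : Type*} [Field K] [AddCommGroup V] [Module K V]
    [FiniteDimensional K V] {B : V →ₗ[K] V →ₗ[K] K} {v : ι → V} (ortho : B.IsOrthoᵢ v)
    (self_ne_zero : ∀ i, B (v i) (v i) ≠ 0) (total : ∀ x, (∀ i, B x (v i) = 0) → x = 0) :
    Nat.card ι = finrank K V := by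
  have linIndep : LinearIndependent K v :=
    LinearMap.linearIndependent_of_isOrthoᵢ ortho self_ne_zero
  have := linIndep.finite
  have := Fintype.ofFinite ι
  rw [Nat.card_eq_fintype_card]
  refine le_antisymm linIndep.fintype_card_le_finrank ?_
  let Φ : V →ₗ[K] ι → K := LinearMap.pi fun i ↦ B.flip (v i)
  have Φ_injective : Function.Injective Φ :=
    (injective_iff_map_eq_zero Φ).2 fun x hx ↦ total x (congrFun hx)
  simpa using LinearMap.finrank_le_finrank_of_injective Φ_injective

theorem natCast_card_subgroup_ne_zero {R G : Type*} [Semiring R] [Group G]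
    [NeZero (Nat.card G : R)] (H : Subgroup G) : (Nat.card H : R) ≠ 0 := fun h ↦
  NeZero.ne (Nat.card G : R) <| by
    rw [← H.card_mul_index, Nat.cast_mul, h, zero_mul]

section ClassFunction

variable {G α : Type*} [Group G]

/-- A function on a group is a class function if it is constant on conjugacy classes. -/
def IsClassFunction (f : G → α) : Prop :=
  ∀ g h : G, f (h * g * h⁻¹) = f g

theorem IsClassFunction.eq_of_isConj {f : G → α} (hf : IsClassFunction f) {g h : G}
    (hgh : IsConj g h) : f g = f h := by
  obtain ⟨c, rfl⟩ := isConj_iff.1 hgh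
  exact (hf g c).symm

theorem IsClassFunction.comp_subtype {f : G → α} (hf : IsClassFunction f) (H : Subgroup G) :
    IsClassFunction fun h : H ↦ f h :=
  fun g h ↦ hf g h

variable (k : Type*) [Semiring k]

/-- The `k`-valued class functions of `G` vanishing outside a set `s`. -/
def classFunctionsOn (s : Set G) : Submodule k (G → k) where
  carrier := {f | IsClassFunction f ∧ ∀ g ∉ s, f g = 0}
  zero_mem' := ⟨fun _ _ ↦ rfl, fun _ _ ↦ rfl⟩
  add_mem' := fun ⟨ha, ha'⟩ ⟨hb, hb'⟩ ↦
    ⟨fun g h ↦ congrArg₂ (· + ·) (ha g h) (hb g h), fun g hg ↦ by simp [ha' g hg, hb' g hg]⟩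
  smul_mem' := fun c _ ⟨ha, ha'⟩ ↦
    ⟨fun g h ↦ congrArg (c • ·) (ha g h), fun g hg ↦ by simp [ha' g hg]⟩

/-- The linear map turning a function on the conjugacy classes contained in `s` into a class
function on `G`, with value `0` on the other classes. -/
noncomputable def classFunctionOfClasses (s : Set G) :
    ({c : ConjClasses G | c.carrier ⊆ s} → k) →ₗ[k] G → k :=
  LinearMap.funLeft k k ConjClasses.mk ∘ₗ Function.ExtendByZero.linearMap k Subtype.val

theorem classFunctionOfClasses_injective (s : Set G) :
    Function.Injective (classFunctionOfClasses k s) :=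
  (LinearMap.funLeft_injective_of_surjective k k _ ConjClasses.mk_surjective).comp
    (Function.extend_injective Subtype.val_injective (0 : ConjClasses G → k))

variable {k} {s : Set G} (a : {c : ConjClasses G | c.carrier ⊆ s} → k) {g : G}

theorem classFunctionOfClasses_of_subset (hg : (ConjClasses.mk g).carrier ⊆ s) :
    classFunctionOfClasses k s a g = a ⟨ConjClasses.mk g, hg⟩ :=
  Subtype.val_injective.extend_apply a 0 ⟨ConjClasses.mk g, hg⟩

theorem classFunctionOfClasses_of_not_subset (hg : ¬(ConjClasses.mk g).carrier ⊆ s) :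
    classFunctionOfClasses k s a g = 0 :=
  Function.extend_apply' _ _ _ fun ⟨c, hc⟩ ↦ hg (hc ▸ c.2 :)

variable (k s)

theorem range_classFunctionOfClasses :
    LinearMap.range (classFunctionOfClasses k s) = classFunctionsOn k s := by
  ext f
  constructor
  · rintro ⟨a, rfl⟩
    refine ⟨fun g h ↦ ?_, fun g hg ↦ ?_⟩
    · have : ConjClasses.mk (h * g * h⁻¹) = ConjClasses.mk g :=
        ConjClasses.mk_eq_mk_iff_isConj.2 (isConj_iff.2 ⟨h, rfl⟩).symm
      exact congrArg (Function.extend Subtype.val a 0) this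
    · exact classFunctionOfClasses_of_not_subset a fun h ↦ hg (h ConjClasses.mem_carrier_mk)
  · rintro ⟨hf, hf_zero⟩
    refine ⟨fun c ↦ Quotient.lift f (fun _ _ ↦ hf.eq_of_isConj) c.1, funext fun g ↦ ?_⟩
    by_cases hg : (ConjClasses.mk g).carrier ⊆ s
    · exact classFunctionOfClasses_of_subset _ hg
    · obtain ⟨x, hxg, hxs⟩ := Set.not_subset.1 hg
      have hconj : IsConj x g :=
        ConjClasses.mk_eq_mk_iff_isConj.1 (ConjClasses.mem_carrier_iff_mk_eq.1 hxg)
      rw [classFunctionOfClasses_of_not_subset _ hg, ← hf.eq_of_isConj hconj, hf_zero x hxs]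

theorem finrank_classFunctionsOn [StrongRankCondition k] [Finite G] :
    finrank k (classFunctionsOn k s) = {c : ConjClasses G | c.carrier ⊆ s}.ncard := by
  have := Fintype.ofFinite {c : ConjClasses G | c.carrier ⊆ s}
  rw [← range_classFunctionOfClasses,
    LinearMap.finrank_range_of_inj (classFunctionOfClasses_injective k s),
    finrank_fintype_fun_eq_card, ← Nat.card_eq_fintype_card, Nat.card_coe_set_eq]

end ClassFunction

section Schur

/-- The operator `∑ h, f h • ρ h⁻¹` attached to a class function `f`, which commutes with the
action of the group. -/
def classFunctionIntertwiner {k G V : Type*} [CommSemiring k] [Group G] [Fintype G]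
    [AddCommMonoid V] [Module k V] (ρ : Representation k G V) {f : G → k}
    (hf : IsClassFunction f) : ρ.IntertwiningMap ρ where
  toLinearMap := ∑ h, f h • ρ h⁻¹
  isIntertwining' g := by
    change (∑ h, f h • ρ h⁻¹) * ρ g = ρ g * ∑ h, f h • ρ h⁻¹
    rw [Finset.sum_mul, Finset.mul_sum, ← (MulAut.conj g).toEquiv.sum_comp]
    refine Finset.sum_congr rfl fun h _ ↦ ?_
    rw [MulEquiv.toEquiv_eq_coe, MulEquiv.coe_toEquiv, MulAut.conj_apply, hf, smul_mul_assoc,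
      mul_smul_comm, ← map_mul, ← map_mul]
    congr 2
    group

variable {k G V : Type*} [Field k] [IsAlgClosed k] [Group G] [AddCommGroup V] [Module k V]
  [FiniteDimensional k V]

theorem exists_sum_smul_inv_eq_smul_one [Fintype G] (ρ : Representation k G V)
    [ρ.IsIrreducible] {f : G → k} (hf : IsClassFunction f) :
    ∃ c : k, ∑ h, f h • ρ h⁻¹ = c • 1 ∧ c * finrank k V = ∑ h, f h * ρ.character h⁻¹ := by
  obtain ⟨c, hc⟩ :=
    (Representation.IsIrreducible.algebraMap_intertwiningMap_bijective_of_isAlgClosed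
      (ρ := ρ)).2 (classFunctionIntertwiner ρ hf)
  have scalar : ∑ h, f h • ρ h⁻¹ = c • (1 : V →ₗ[k] V) :=
    (congrArg Representation.IntertwiningMap.toLinearMap hc).symm
  have trace_eq := congrArg (LinearMap.trace k V) scalar
  simp only [map_sum, map_smul, LinearMap.trace_one, smul_eq_mul] at trace_eq
  exact ⟨c, scalar, trace_eq.symm⟩

theorem natCast_finrank_ne_zero_of_isIrreducible [Finite G] [NeZero (Nat.card G : k)]
    (ρ : Representation k G V) [ρ.IsIrreducible] : (finrank k V : k) ≠ 0 := by
  have := Fintype.ofFinite G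
  have := invertibleOfNonzero (NeZero.ne (Nat.card G : k))
  -- The operator attached to the character of `ρ` itself is a scalar of trace `|G| ≠ 0`.
  obtain ⟨c, -, hc⟩ := exists_sum_smul_inv_eq_smul_one ρ ρ.char_conj
  have norm_one := Representation.card_inv_mul_sum_char_mul_char_eq_finrank ρ ρ
  rw [← hc] at norm_one
  intro hdim
  simp [hdim] at norm_one

theorem sum_smul_inv_eq_zero_of_isIrreducible [Fintype G] [NeZero (Nat.card G : k)]
    (ρ : Representation k G V) [ρ.IsIrreducible] {f : G → k} (hf : IsClassFunction f)
    (hfρ : ∑ h, f h * ρ.character h⁻¹ = 0) : ∑ h, f h • ρ h⁻¹ = 0 := by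
  obtain ⟨c, scalar, hc⟩ := exists_sum_smul_inv_eq_smul_one ρ hf
  have c_eq_zero : c = 0 :=
    (mul_eq_zero.1 (hc.trans hfρ)).resolve_right (natCast_finrank_ne_zero_of_isIrreducible ρ)
  rw [scalar, c_eq_zero, zero_smul]

end Schur

theorem asAlgebraHom_ofModule' {k G : Type*} [CommSemiring k] [Monoid G] (M : Type*)
    [AddCommMonoid M] [Module k M] [Module k[G] M] [IsScalarTower k k[G] M] :
    (Representation.ofModule' M : Representation k G M).asAlgebraHom = Algebra.lsmul k k M :=
  (MonoidAlgebra.lift k (M →ₗ[k] M) G).apply_symm_apply _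

theorem isIrreducible_ofModule' {k G : Type*} [Field k] [Monoid G] (M : Type*) [AddCommGroup M]
    [Module k M] [Module k[G] M] [IsScalarTower k k[G] M] [IsSimpleModule k[G] M] :
    (Representation.ofModule' M : Representation k G M).IsIrreducible := by
  let ρ : Representation k G M := Representation.ofModule' M
  let e : ρ.asModule ≃ₗ[k[G]] M :=
    { ρ.asModuleEquiv with
      map_smul' := fun r x ↦ by
        have := ρ.asModuleEquiv_map_smul r x
        rwa [asAlgebraHom_ofModule'] at this }
  exact (Representation.irreducible_iff_isSimpleModule_asModule ρ).2 (IsSimpleModule.congr e)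

theorem simple_fdRep_of_isIrreducible {k V : Type u} {G : Type v} [Field k] [Monoid G]
    [AddCommGroup V] [Module k V] [FiniteDimensional k V] (ρ : Representation k G V)
    [ρ.IsIrreducible] : Simple (FDRep.of ρ) := by
  let F := forget₂ (FDRep k G) (Rep k G) ⋙ Rep.equivalenceModuleMonoidAlgebra.functor
  have : IsSimpleModule k[G] (F.obj (FDRep.of ρ)) :=
    inferInstanceAs (IsSimpleModule k[G] ρ.asModule)
  have : Simple (F.obj (FDRep.of ρ)) := simple_iff_isSimpleModule' _ |>.2 this
  exact F.simple_of_simple_obj _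

theorem eq_zero_of_forall_isSimpleModule_smul_eq_zero {R : Type*} [Ring R] [IsSemisimpleRing R]
    {a : R} (ha : ∀ I : Submodule R R, IsSimpleModule R (R ⧸ I) → ∀ m : R ⧸ I, a • m = 0) :
    a = 0 := by
  have : a ∈ Module.jacobson R R := by
    refine Submodule.mem_sInf.2 fun I hI ↦ ?_
    rw [← Submodule.Quotient.mk_eq_zero]
    simpa [← Submodule.Quotient.mk_smul] using
      ha I (isSimpleModule_iff_isCoatom.2 hI) (Submodule.Quotient.mk 1)
  rwa [IsSemisimpleModule.jacobson_eq_bot, Submodule.mem_bot] at this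

section CharacterPairing

variable {k G : Type*} [Field k] [Group G] [Fintype G]

/-- The normalised bilinear pairing `|G|⁻¹ * ∑ g, f g * φ g⁻¹` of functions on a finite group. On
complex characters it is the usual Hermitian inner product, since `φ g⁻¹ = conj (φ g)` there. -/
noncomputable def characterPairing : (G → k) →ₗ[k] (G → k) →ₗ[k] k :=
  LinearMap.mk₂ k (fun f φ ↦ (Nat.card G : k)⁻¹ * ∑ g, f g * φ g⁻¹)
    (by simp [add_mul, mul_add, Finset.sum_add_distrib])
    (by simp [mul_assoc, mul_left_comm, Finset.mul_sum])
    (by simp [mul_add, Finset.sum_add_distrib])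
    (by simp [mul_left_comm, Finset.mul_sum])

theorem characterPairing_apply (f φ : G → k) :
    characterPairing f φ = (Nat.card G : k)⁻¹ * ∑ g, f g * φ g⁻¹ :=
  rfl

end CharacterPairing

/-- `χ` is the character of an irreducible finite-dimensional representation of `G` over `k`. -/
def IsIrreducibleCharacter {k : Type u} {G : Type v} [Field k] [Monoid G] (χ : G → k) : Prop :=
  ∃ V : FDRep k G, Simple V ∧ V.character = χ

section IrreducibleCharacter

theorem IsIrreducibleCharacter.comp_mulEquiv {k : Type u} {G : Type v} {H : Type w} [Field k]
    [Monoid G] [Monoid H] {χ : H → k} (hχ : IsIrreducibleCharacter χ) (e : G ≃* H) :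
    IsIrreducibleCharacter (χ ∘ e) := by
  obtain ⟨V, _, rfl⟩ := hχ
  exact ⟨(Action.resEquiv _ e).functor.obj V, CategoryTheory.simple_obj _ _, rfl⟩

open scoped Classical in
theorem IsIrreducibleCharacter.characterPairing_eq_ite {k : Type u} {G : Type v} [Field k]
    [IsAlgClosed k] [Group G] [Fintype G] [NeZero (Nat.card G : k)] {χ ψ : G → k}
    (hχ : IsIrreducibleCharacter χ) (hψ : IsIrreducibleCharacter ψ) :
    characterPairing χ ψ = if χ = ψ then 1 else 0 := by
  have := invertibleOfNonzero (NeZero.ne (Nat.card G : k))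
  obtain ⟨V, _, rfl⟩ := hχ
  obtain ⟨W, _, rfl⟩ := hψ
  split_ifs with h
  · rw [← h, characterPairing_apply, FDRep.char_orthonormal, if_pos ⟨Iso.refl V⟩]
  · rw [characterPairing_apply, FDRep.char_orthonormal, if_neg fun ⟨i⟩ ↦ h (FDRep.char_iso i)]

variable {k G : Type u} [Field k] [IsAlgClosed k] [Group G] [Fintype G] [NeZero (Nat.card G : k)]

theorem sum_single_inv_smul_eq_zero {M : Type u} [AddCommGroup M] [Module k M]
    [FiniteDimensional k M] [Module k[G] M] [IsScalarTower k k[G] M] [IsSimpleModule k[G] M]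
    {f : G → k} (hf : IsClassFunction f)
    (ortho : ∀ χ, IsIrreducibleCharacter χ → characterPairing f χ = 0) (m : M) :
    (∑ h, MonoidAlgebra.single h⁻¹ (f h)) • m = 0 := by
  let ρ : Representation k G M := Representation.ofModule' M
  have : ρ.IsIrreducible := isIrreducible_ofModule' M
  have irreducible_ρ : IsIrreducibleCharacter ρ.character :=
    ⟨FDRep.of ρ, simple_fdRep_of_isIrreducible ρ, rfl⟩
  have ortho_ρ : ∑ h, f h * ρ.character h⁻¹ = 0 :=
    (mul_eq_zero.1 (ortho _ irreducible_ρ)).resolve_left (inv_ne_zero (NeZero.ne _))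
  have acts_by_zero : ρ.asAlgebraHom (∑ h, MonoidAlgebra.single h⁻¹ (f h)) = 0 := by
    simpa only [map_sum, Representation.asAlgebraHom_single] using
      sum_smul_inv_eq_zero_of_isIrreducible ρ hf ortho_ρ
  rw [asAlgebraHom_ofModule'] at acts_by_zero
  exact LinearMap.congr_fun acts_by_zero m

theorem eq_zero_of_forall_characterPairing_eq_zero {f : G → k} (hf : IsClassFunction f)
    (ortho : ∀ χ, IsIrreducibleCharacter χ → characterPairing f χ = 0) : f = 0 := by
  have group_algebra_eq_zero : ∑ h, MonoidAlgebra.single h⁻¹ (f h) = 0 :=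
    eq_zero_of_forall_isSimpleModule_smul_eq_zero fun _ _ ↦ sum_single_inv_smul_eq_zero hf ortho
  funext g
  have := DFunLike.congr_fun (congrArg MonoidAlgebra.coeff group_algebra_eq_zero) g⁻¹
  classical
  simpa [Finsupp.single_apply] using this

end IrreducibleCharacter

section Induction

variable {k G : Type*} [Field k] [Group G] [Fintype G] (H : Subgroup G)
  [DecidablePred fun g => g ∈ H]

/-- The function on `G` induced from a function `φ` on `H`, which extends `inducedChar` to an
arbitrary coefficient field. -/
noncomputable def inducedClassFun (φ : H → k) : G → k :=
  fun g => (Fintype.card H : k)⁻¹ *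
    ∑ x : G, if h : x⁻¹ * g * x ∈ H then φ ⟨x⁻¹ * g * x, h⟩ else 0

theorem isClassFunction_inducedClassFun (φ : H → k) :
    IsClassFunction (inducedClassFun H φ) := fun g h ↦ by
  unfold inducedClassFun
  rw [← Equiv.sum_comp (Equiv.mulLeft h)]
  simp only [Equiv.coe_mulLeft, mul_inv_rev, mul_assoc, inv_mul_cancel_left]

theorem characterPairing_inducedClassFun [NeZero (Nat.card G : k)] {f : G → k}
    (hf : IsClassFunction f) (φ : H → k) :
    characterPairing f (inducedClassFun H φ) = characterPairing (fun h : H ↦ f h) φ := by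
  let φ₀ : G → k := fun g ↦ if h : g ∈ H then φ ⟨g, h⟩ else 0
  have φ₀_inv (h : H) : φ₀ (h : G)⁻¹ = φ h⁻¹ := dif_pos (h⁻¹).2
  have sum_conj (x : G) : ∑ g, f g * φ₀ (x⁻¹ * g⁻¹ * x) = ∑ g, f g * φ₀ g⁻¹ := by
    rw [← (MulAut.conj x).toEquiv.sum_comp]
    refine Finset.sum_congr rfl fun g _ ↦ ?_
    have conj_inv : x⁻¹ * (x * g * x⁻¹)⁻¹ * x = g⁻¹ := by group
    simp only [MulEquiv.toEquiv_eq_coe, MulEquiv.coe_toEquiv, MulAut.conj_apply, hf g x, conj_inv]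
  have sum_restrict : ∑ h : H, f h * φ h⁻¹ = ∑ g, f g * φ₀ g⁻¹ :=
    Fintype.sum_of_injective _ H.subtype_injective _ _
      (fun g hg ↦ by simp_all [φ₀]) (fun h ↦ congrArg (f h * ·) (φ₀_inv h).symm)
  calc characterPairing f (inducedClassFun H φ)
      = (Nat.card G : k)⁻¹ * ∑ x : G, (Nat.card H : k)⁻¹ * ∑ g, f g * φ₀ (x⁻¹ * g⁻¹ * x) := by
        simp only [characterPairing_apply, inducedClassFun, φ₀, Finset.mul_sum,
          Nat.card_eq_fintype_card]
        rw [Finset.sum_comm]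
        simp only [mul_left_comm]
    _ = (Nat.card H : k)⁻¹ * ∑ g, f g * φ₀ g⁻¹ := by
        simp only [sum_conj, Finset.sum_const, Finset.card_univ, nsmul_eq_mul,
          ← Nat.card_eq_fintype_card]
        rw [inv_mul_cancel_left₀ (NeZero.ne _)]
    _ = characterPairing (fun h : H ↦ f h) φ := by rw [characterPairing_apply, sum_restrict]

end Induction

section Normal

variable {k G : Type*} [Field k] [Group G] [Fintype G] (N : Subgroup G) [N.Normal]
  [DecidablePred fun g => g ∈ N]

theorem inducedClassFun_coe (φ : N → k) :
    (fun n : N ↦ inducedClassFun N φ n) =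
      (Nat.card N : k)⁻¹ • ∑ x : G, φ ∘ (MulAut.conjNormal x : MulAut N) := by
  funext n
  have dite_eq (x : G) : (if h : x⁻¹ * n * x ∈ N then φ ⟨x⁻¹ * n * x, h⟩ else 0) =
      φ (MulAut.conjNormal x⁻¹ n) := by
    have h : x⁻¹ * n * x ∈ N := by simpa using (MulAut.conjNormal x⁻¹ n).2
    rw [dif_pos h]
    congr 1
    ext
    simp
  rw [Pi.smul_apply, Finset.sum_apply, ← Equiv.sum_comp (Equiv.inv G)]
  simp only [inducedClassFun, dite_eq, Nat.card_eq_fintype_card]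
  rfl

theorem inducedClassFun_of_notMem (φ : N → k) {g : G} (hg : g ∉ N) :
    inducedClassFun N φ g = 0 := by
  refine mul_eq_zero_of_right _ (Finset.sum_eq_zero fun x _ ↦ dif_neg fun h ↦ hg ?_)
  simpa [mul_assoc] using Subgroup.Normal.conj_mem ‹_› _ h x

theorem inducedClassFun_mem_classFunctionsOn (φ : N → k) :
    inducedClassFun N φ ∈ classFunctionsOn k N :=
  ⟨isClassFunction_inducedClassFun N φ, fun _ ↦ inducedClassFun_of_notMem N φ⟩

theorem inducedClassFun_comp_conjNormal (φ : N → k) (y : G) :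
    inducedClassFun N (φ ∘ (MulAut.conjNormal y : MulAut N)) = inducedClassFun N φ := by
  funext g
  by_cases hg : g ∈ N
  · suffices (fun n : N ↦ inducedClassFun N (φ ∘ (MulAut.conjNormal y : MulAut N)) n) =
        fun n : N ↦ inducedClassFun N φ n from congrFun this ⟨g, hg⟩
    rw [inducedClassFun_coe, inducedClassFun_coe,
      ← Equiv.sum_comp (Equiv.mulLeft y) fun x ↦ φ ∘ (MulAut.conjNormal x : MulAut N)]
    simp only [Equiv.coe_mulLeft, map_mul, MulAut.coe_mul, Function.comp_assoc]
  · rw [inducedClassFun_of_notMem N _ hg, inducedClassFun_of_notMem N _ hg]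

end Normal

/-- The inertia group in `G` of a function on a normal subgroup `N`: the elements whose conjugation
action on `N` leaves the function unchanged. -/
def inertiaSubgroup {G α : Type*} [Group G] {N : Subgroup G} [N.Normal] (φ : N → α) :
    Subgroup G where
  carrier := {x | φ ∘ (MulAut.conjNormal x : MulAut N) = φ}
  one_mem' := by rw [Set.mem_ofPred_eq, map_one]; rfl
  mul_mem' {x y} hx hy := by
    rw [Set.mem_ofPred_eq, map_mul]
    exact (congrArg (· ∘ (MulAut.conjNormal y : MulAut N)) hx).trans hy
  inv_mem' {x} hx := by
    rw [Set.mem_ofPred_eq, map_inv]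
    exact ((MulAut.conjNormal x : MulAut N).toEquiv.comp_symm_eq _ _).2 hx.symm

section InducedCharacter

variable {k : Type u} {G : Type v} [Field k] [IsAlgClosed k] [Group G] [Fintype G]
  [NeZero (Nat.card G : k)] {N : Subgroup G} [N.Normal] [DecidablePred fun g => g ∈ N]
  {χ ψ : N → k}

theorem characterPairing_inducedClassFun_inducedClassFun (hχ : IsIrreducibleCharacter χ)
    (hψ : IsIrreducibleCharacter ψ) :
    characterPairing (inducedClassFun N χ) (inducedClassFun N ψ) =
      (Nat.card N : k)⁻¹ * {x : G | χ ∘ (MulAut.conjNormal x : MulAut N) = ψ}.ncard := by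
  classical
  have : NeZero (Nat.card N : k) := ⟨natCast_card_subgroup_ne_zero N⟩
  rw [characterPairing_inducedClassFun N (isClassFunction_inducedClassFun N χ),
    inducedClassFun_coe, map_smul, map_sum, LinearMap.smul_apply, LinearMap.sum_apply]
  simp only [(hχ.comp_mulEquiv _).characterPairing_eq_ite hψ, Finset.sum_boole, smul_eq_mul,
    Set.ncard_eq_toFinset_card', Set.toFinset_ofPred]

theorem characterPairing_inducedClassFun_self_ne_zero (hχ : IsIrreducibleCharacter χ) :
    characterPairing (inducedClassFun N χ) (inducedClassFun N χ) ≠ 0 := by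
  rw [characterPairing_inducedClassFun_inducedClassFun hχ hχ]
  exact mul_ne_zero (inv_ne_zero (natCast_card_subgroup_ne_zero N))
    (natCast_card_subgroup_ne_zero (inertiaSubgroup χ))

theorem characterPairing_inducedClassFun_eq_zero (hχ : IsIrreducibleCharacter χ)
    (hψ : IsIrreducibleCharacter ψ) (hne : inducedClassFun N χ ≠ inducedClassFun N ψ) :
    characterPairing (inducedClassFun N χ) (inducedClassFun N ψ) = 0 := by
  have not_conj : {x : G | χ ∘ (MulAut.conjNormal x : MulAut N) = ψ} = ∅ :=
    Set.eq_empty_of_forall_notMem fun x hx ↦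
      hne (hx ▸ (inducedClassFun_comp_conjNormal N χ x).symm)
  rw [characterPairing_inducedClassFun_inducedClassFun hχ hψ, not_conj, Set.ncard_empty,
    Nat.cast_zero, mul_zero]

end InducedCharacter

section Counting

variable {k G : Type u} [Field k] [IsAlgClosed k] [Group G] [Fintype G] [NeZero (Nat.card G : k)]
  (N : Subgroup G) [DecidablePred fun g => g ∈ N]

theorem eq_zero_of_forall_characterPairing_inducedClassFun_eq_zero {f : G → k}
    (hf : f ∈ classFunctionsOn k (N : Set G))
    (ortho : ∀ χ : N → k, IsIrreducibleCharacter χ →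
      characterPairing f (inducedClassFun N χ) = 0) : f = 0 := by
  have : NeZero (Nat.card N : k) := ⟨natCast_card_subgroup_ne_zero N⟩
  have restrict_eq_zero : (fun n : N ↦ f n) = 0 :=
    eq_zero_of_forall_characterPairing_eq_zero (hf.1.comp_subtype N) fun χ hχ ↦
      (characterPairing_inducedClassFun N hf.1 χ).symm.trans (ortho χ hχ)
  funext g
  by_cases hg : g ∈ N
  · exact congrFun restrict_eq_zero ⟨g, hg⟩
  · exact hf.2 g hg

theorem card_induced_eq_card_conjClasses_general [N.Normal] :
    Set.ncard {f : G → k | ∃ V : FDRep k N, Simple V ∧ f = inducedClassFun N V.character} =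
      Set.ncard {c : ConjClasses G | c.carrier ⊆ N} := by
  set S := {f : G → k | ∃ V : FDRep k N, Simple V ∧ f = inducedClassFun N V.character}
  let W := classFunctionsOn k (N : Set G)
  have S_subset (s : S) : (s : G → k) ∈ W := by
    obtain ⟨_, V, -, rfl⟩ := s
    exact inducedClassFun_mem_classFunctionsOn N _
  rw [← finrank_classFunctionsOn k, ← Nat.card_coe_set_eq]
  refine card_eq_finrank_of_isOrthoᵢ (B := characterPairing.domRestrict₁₂ W W)
    (v := fun s : S ↦ ⟨s, S_subset s⟩) ?ortho ?self_ne_zero ?total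
  case ortho =>
    rintro ⟨_, V, hV, rfl⟩ ⟨_, V', hV', rfl⟩ hne
    exact characterPairing_inducedClassFun_eq_zero ⟨V, hV, rfl⟩ ⟨V', hV', rfl⟩
      fun h ↦ hne (Subtype.ext h)
  case self_ne_zero =>
    rintro ⟨_, V, hV, rfl⟩
    exact characterPairing_inducedClassFun_self_ne_zero ⟨V, hV, rfl⟩
  case total =>
    rintro ⟨f, hf⟩ ortho
    refine Subtype.ext (eq_zero_of_forall_characterPairing_inducedClassFun_eq_zero N hf ?_)
    rintro _ ⟨V, hV, rfl⟩
    exact ortho ⟨_, V, hV, rfl⟩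

end Counting

/-- For `N ⊴ G`, the number of distinct `G`-modules induced from irreducible complex
`N`-modules (counted via their characters, which determine complex modules up to
isomorphism) equals the number of conjugacy classes of `G` contained in `N`. -/
theorem card_induced_eq_card_conjClasses {G : Type} [Group G] [Fintype G] (N : Subgroup G)
    [N.Normal] [DecidablePred fun g => g ∈ N] :
    Set.ncard {f : G → ℂ | ∃ V : FDRep ℂ ↥N, Simple V ∧ f = inducedChar N V.character} =
      Set.ncard {c : ConjClasses G | c.carrier ⊆ ↑N} :=
  card_induced_eq_card_conjClasses_general N
end

section
/- For the pair A₄ ⊴ S₄ with V the 3-dimensional irreducible A₄-module (restriction of the standard S₄-module), the Poincaré series of A₄-invariants in the tensor algebra T(V) equals (1-2t-2t²)/(1-2t-3t²) as a formal power series, i.e., ∑_{k≥0} dim((V^{⊗k})^{A₄}) t^k = (1-2t-2t²)/((1-3t)(1+t)). -/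
open CategoryTheory MonoidalCategory PowerSeries

/-!
Let `K` be the Klein four-group in `A₄`. As `K` is normal and `V` is irreducible, `V^K` is `0` or
`V`. It is not `V`: in a nontrivial irreducible representation of `A₄ / K`, which has order `3`, the
translates of a nonzero vector span the space and sum to an invariant vector, that is, to `0`, so
the dimension is less than `3`. Hence `V^K = 0`, the operator `∑ n ∈ K, ρ n` vanishes, and the
character `χ` of `V` sums to `0` over every coset of `K`. The three nontrivial elements of `K` are
conjugate in `A₄`, and so are the four elements of each nontrivial coset, which forces `χ = -1` on
the former and `χ = 0` on the latter. Averaging `χ ^ n` over `A₄` gives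
`12 * dim (V^{⊗n})^{A₄} = 3 ^ n + 3 * (-1) ^ n + 8 * 0 ^ n`, a sum of geometric sequences.
-/

section Irreducible

open Representation

variable {k G V : Type*} [Field k] [AddCommGroup V] [Module k V]

section Monoid

variable [Monoid G] (ρ : Representation k G V)

theorem nontrivial_of_isIrreducible [ρ.IsIrreducible] : Nontrivial V :=
  IsSimpleModule.nontrivial (MonoidAlgebra k G) ρ.asModule

theorem eq_bot_or_eq_top_of_le_comap [ρ.IsIrreducible] {W : Submodule k V}
    (hW : ∀ g, W ≤ W.comap (ρ g)) : W = ⊥ ∨ W = ⊤ :=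
  (eq_bot_or_eq_top (⟨W, hW⟩ : Subrepresentation ρ)).imp
    (congrArg Subrepresentation.toSubmodule) (congrArg Subrepresentation.toSubmodule)

theorem span_range_apply_eq_top [ρ.IsIrreducible] {v : V} (hv : v ≠ 0) :
    Submodule.span k (Set.range fun g => ρ g v) = ⊤ := by
  refine (eq_bot_or_eq_top_of_le_comap ρ fun g => ?_).resolve_left fun h => hv ?_
  · rw [Submodule.span_le]
    rintro _ ⟨h, rfl⟩
    exact Submodule.subset_span ⟨g * h, by simp⟩
  · exact Submodule.span_eq_bot.1 h v ⟨1, by simp⟩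

theorem isIrreducible_of_isIrreducible_comp {H : Type*} [Monoid H] (f : H →* G)
    [Representation.IsIrreducible (ρ.comp f)] : ρ.IsIrreducible where
  exists_pair_ne := by
    have := nontrivial_of_isIrreducible (ρ.comp f)
    exact ⟨⊥, ⊤, fun h => bot_ne_top (congrArg Subrepresentation.toSubmodule h)⟩
  eq_bot_or_eq_top W :=
    (eq_bot_or_eq_top_of_le_comap (ρ.comp f) fun h => W.apply_mem_toSubmodule (f h)).imp
      (fun h => Subrepresentation.toSubmodule_injective h)
      (fun h => Subrepresentation.toSubmodule_injective h)

end Monoid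

variable [Group G] (ρ : Representation k G V)

theorem invariants_eq_bot_or_eq_top [ρ.IsIrreducible] :
    invariants ρ = ⊥ ∨ invariants ρ = ⊤ :=
  eq_bot_or_eq_top_of_le_comap ρ fun g v hv => by
    rwa [Submodule.mem_comap, hv g]

theorem sum_eq_zero_of_invariants_eq_bot [Fintype G] (h : invariants ρ = ⊥) :
    ∑ g, ρ g = 0 := by
  ext v
  have hv : (∑ g, ρ g) v ∈ invariants ρ := fun g => by
    rw [← Module.End.mul_apply, Finset.mul_sum]
    simp_rw [← map_mul]
    rw [(Group.mulLeft_bijective g).sum_comp]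
  rwa [h, Submodule.mem_bot] at hv

theorem finrank_lt_card_of_invariants_eq_bot [Finite G] [ρ.IsIrreducible]
    (h : invariants ρ = ⊥) : Module.finrank k V < Nat.card G := by
  have := Fintype.ofFinite G
  have := nontrivial_of_isIrreducible ρ
  obtain ⟨v, hv⟩ := exists_ne (0 : V)
  rw [Nat.card_eq_fintype_card]
  by_contra! hle
  have hli : LinearIndependent k fun g => ρ g v :=
    linearIndependent_of_top_le_span_of_card_le_finrank (span_range_apply_eq_top ρ hv).ge hle
  have hsum : ∑ g, (1 : k) • ρ g v = 0 := by
    simpa using LinearMap.congr_fun (sum_eq_zero_of_invariants_eq_bot ρ h) v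
  exact one_ne_zero (Fintype.linearIndependent_iff.1 hli (fun _ => 1) hsum 1)

theorem finrank_eq_one_of_invariants_eq_top [ρ.IsIrreducible] (h : invariants ρ = ⊤) :
    Module.finrank k V = 1 := by
  have := nontrivial_of_isIrreducible ρ
  obtain ⟨v, hv⟩ := exists_ne (0 : V)
  have hfix (g : G) : ρ g v = v := (h.ge trivial : v ∈ invariants ρ) g
  have hspan := span_range_apply_eq_top ρ hv
  simp only [hfix, Set.range_const] at hspan
  rw [← finrank_top, ← hspan, finrank_span_singleton hv]

theorem finrank_eq_one_or_finrank_lt_card [Finite G] [ρ.IsIrreducible] :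
    Module.finrank k V = 1 ∨ Module.finrank k V < Nat.card G :=
  (invariants_eq_bot_or_eq_top ρ).symm.imp (finrank_eq_one_of_invariants_eq_top ρ)
    (finrank_lt_card_of_invariants_eq_bot ρ)

variable (N : Subgroup G)

theorem invariants_comp_subtype_eq_bot_or_eq_top [N.Normal] [ρ.IsIrreducible] :
    invariants (ρ.comp N.subtype) = ⊥ ∨ invariants (ρ.comp N.subtype) = ⊤ :=
  eq_bot_or_eq_top_of_le_comap ρ (le_comap_invariants ρ N)

theorem invariants_comp_subtype_eq_bot_of_index_le_finrank [N.Normal] [N.FiniteIndex]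
    [ρ.IsIrreducible] (hone : Module.finrank k V ≠ 1) (hindex : N.index ≤ Module.finrank k V) :
    invariants (ρ.comp N.subtype) = ⊥ := by
  refine (invariants_comp_subtype_eq_bot_or_eq_top ρ N).resolve_right fun htop => ?_
  have : IsTrivial (ρ.comp N.subtype) :=
    ⟨fun n => LinearMap.ext fun v => (htop.ge trivial : v ∈ invariants (ρ.comp N.subtype)) n⟩
  have : Representation.IsIrreducible ((ρ.ofQuotient N).comp (QuotientGroup.mk' N)) :=
    inferInstanceAs ρ.IsIrreducible
  have := isIrreducible_of_isIrreducible_comp (ρ.ofQuotient N) (QuotientGroup.mk' N)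
  exact (finrank_eq_one_or_finrank_lt_card (ρ.ofQuotient N)).elim hone hindex.not_gt

variable {ρ}

theorem character_eq_of_isConj {g h : G} (hgh : IsConj g h) :
    ρ.character g = ρ.character h := by
  obtain ⟨c, rfl⟩ := isConj_iff.1 hgh
  rw [char_conj]

variable {N}

theorem sum_character_mul_eq_zero [Fintype N] (h : invariants (ρ.comp N.subtype) = ⊥) (g : G) :
    ∑ n : N, ρ.character (g * n) = 0 :=
  calc
    ∑ n : N, ρ.character (g * n) = LinearMap.trace k V (ρ g * ∑ n, (ρ.comp N.subtype) n) := by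
      simp [character, Finset.mul_sum]
    _ = 0 := by rw [sum_eq_zero_of_invariants_eq_bot _ h, mul_zero, map_zero]

end Irreducible

section AlternatingGroup

open alternatingGroup Equiv.Perm

theorem mem_kleinFour_iff_mul_self_eq_one {α : Type*} [Fintype α] [DecidableEq α]
    (hα : Nat.card α = 4) {g : alternatingGroup α} : g ∈ kleinFour α ↔ g * g = 1 := by
  constructor
  · intro hg
    have := kleinFour_isKleinFour hα
    exact congrArg Subtype.val (IsKleinFour.mul_self (⟨g, hg⟩ : kleinFour α))
  · intro hg
    have horder : orderOf (g : Equiv.Perm α) ∣ 2 ^ 1 :=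
      orderOf_dvd_of_pow_eq_one (by rw [pow_one, pow_two]; exact congrArg Subtype.val hg)
    rw [← SetLike.mem_coe, coe_kleinFour_of_card_eq_four hα]
    simpa using mem_kleinFour_of_order_two_pow hα g.2 horder

theorem index_kleinFour {α : Type*} [Fintype α] [DecidableEq α] (hα : Nat.card α = 4) :
    (kleinFour α).index = 3 := by
  have h := (kleinFour α).card_mul_index
  rw [kleinFour_card_of_card_eq_four hα, card_of_card_eq_four hα] at h
  omega

theorem isConj_of_mem_kleinFour {g h : alternatingGroup (Fin 4)}
    (hg : g ∈ kleinFour (Fin 4)) (hh : h ∈ kleinFour (Fin 4)) (hg1 : g ≠ 1) (hh1 : h ≠ 1) :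
    IsConj g h := by
  rw [mem_kleinFour_iff_mul_self_eq_one (Nat.card_fin 4)] at hg hh
  rw [isConj_iff]
  revert g h
  decide

theorem isConj_mul_of_notMem_kleinFour {g n : alternatingGroup (Fin 4)}
    (hg : g ∉ kleinFour (Fin 4)) (hn : n ∈ kleinFour (Fin 4)) : IsConj g (g * n) := by
  rw [mem_kleinFour_iff_mul_self_eq_one (Nat.card_fin 4)] at hg hn
  rw [isConj_iff]
  revert g n
  decide

theorem sum_eq_of_eq_on_kleinFour {M : Type*} [AddCommMonoid M]
    {f : alternatingGroup (Fin 4) → M} {a b c : M} (ha : f 1 = a)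
    (hb : ∀ g ∈ kleinFour (Fin 4), g ≠ 1 → f g = b) (hc : ∀ g ∉ kleinFour (Fin 4), f g = c) :
    ∑ g, f g = a + 3 • b + 8 • c := by
  simp only [mem_kleinFour_iff_mul_self_eq_one (Nat.card_fin 4)] at hb hc
  have hf (g) : f g = if g = 1 then a else if g * g = 1 then b else c := by
    split_ifs with h₁ h₂
    · rw [h₁, ha]
    · exact hb g h₂ h₁
    · exact hc g h₂
  have h₁ : Finset.card {g : alternatingGroup (Fin 4) | g = 1} = 1 := by decide
  have h₃ : Finset.card {g : alternatingGroup (Fin 4) | g ≠ 1 ∧ g * g = 1} = 3 := by decide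
  have h₈ : Finset.card {g : alternatingGroup (Fin 4) | g ≠ 1 ∧ g * g ≠ 1} = 8 := by decide
  simp only [hf, Finset.sum_ite, Finset.filter_filter, Finset.sum_const, ← ne_eq, h₁, h₃, h₈,
    one_smul, add_assoc]

end AlternatingGroup

section Character

open Representation alternatingGroup

variable {k V : Type*} [Field k] [AddCommGroup V] [Module k V]
  {ρ : Representation k (alternatingGroup (Fin 4)) V}

theorem three_mul_character_of_mem_kleinFour [FiniteDimensional k V]
    (hρ : invariants (ρ.comp (kleinFour (Fin 4)).subtype) = ⊥) {g : alternatingGroup (Fin 4)}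
    (hg : g ∈ kleinFour (Fin 4)) (hg1 : g ≠ 1) :
    3 * ρ.character g = -Module.finrank k V := by
  classical
  have := Fintype.ofFinite (kleinFour (Fin 4))
  have hconj : ∀ n ∈ ({1}ᶜ : Finset (kleinFour (Fin 4))), ρ.character n = ρ.character g :=
    fun n hn => character_eq_of_isConj
      (isConj_of_mem_kleinFour n.2 hg (by simpa using hn) hg1)
  have hcard : Finset.card ({1}ᶜ : Finset (kleinFour (Fin 4))) = 3 := by
    rw [Finset.card_compl, ← Nat.card_eq_fintype_card,
      kleinFour_card_of_card_eq_four (Nat.card_fin 4), Finset.card_singleton]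
  have hsum := sum_character_mul_eq_zero hρ 1
  simp only [one_mul] at hsum
  rw [Fintype.sum_eq_add_sum_compl 1, Finset.sum_congr rfl hconj, Finset.sum_const, hcard,
    OneMemClass.coe_one, char_one, nsmul_eq_mul, Nat.cast_ofNat] at hsum
  exact (neg_eq_of_add_eq_zero_right hsum).symm

theorem character_of_notMem_kleinFour [CharZero k]
    (hρ : invariants (ρ.comp (kleinFour (Fin 4)).subtype) = ⊥) {g : alternatingGroup (Fin 4)}
    (hg : g ∉ kleinFour (Fin 4)) : ρ.character g = 0 := by
  have := Fintype.ofFinite (kleinFour (Fin 4))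
  have hconj (n : kleinFour (Fin 4)) : ρ.character (g * n) = ρ.character g :=
    (character_eq_of_isConj (isConj_mul_of_notMem_kleinFour hg n.2)).symm
  simpa [hconj] using sum_character_mul_eq_zero hρ g

theorem sum_character_pow_of_finrank_eq_three [CharZero k] [ρ.IsIrreducible]
    (hdim : Module.finrank k V = 3) (n : ℕ) :
    ∑ g, ρ.character g ^ n = 3 ^ n + 3 * (-1) ^ n + 8 * 0 ^ n := by
  have := FiniteDimensional.of_finrank_eq_succ hdim
  have := normal_kleinFour (Nat.card_fin 4)
  have hρ : invariants (ρ.comp (kleinFour (Fin 4)).subtype) = ⊥ :=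
    invariants_comp_subtype_eq_bot_of_index_le_finrank ρ _ (by omega)
      (by rw [index_kleinFour (Nat.card_fin 4), hdim])
  have hone : ρ.character 1 = 3 := by rw [char_one, hdim, Nat.cast_ofNat]
  have hmem (g) (hg : g ∈ kleinFour (Fin 4)) (hg1 : g ≠ 1) : ρ.character g = -1 := by
    have h := three_mul_character_of_mem_kleinFour hρ hg hg1
    rw [hdim, Nat.cast_ofNat] at h
    linear_combination h / 3
  rw [sum_eq_of_eq_on_kleinFour (congrArg (· ^ n) hone)
    (fun g hg hg1 => congrArg (· ^ n) (hmem g hg hg1))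
    (fun g hg => congrArg (· ^ n) (character_of_notMem_kleinFour hρ hg))]
  simp only [nsmul_eq_mul, Nat.cast_ofNat]

end Character

section FDRep

open Representation

variable {k G : Type*} [Field k]

theorem isIrreducible_of_simple [Monoid G] (V : FDRep k G) [Simple V] :
    Representation.IsIrreducible V.ρ where
  exists_pair_ne := ⟨⊥, ⊤, fun h => id_nonzero V <| by
    ext v
    exact (h.ge trivial : v ∈ (⊥ : Subrepresentation V.ρ))⟩
  eq_bot_or_eq_top W := by
    let i : FDRep.of W.toRepresentation ⟶ V :=
      ⟨FGModuleCat.ofHom W.toSubmodule.subtype, fun g => by ext; rfl⟩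
    have : Mono i := ConcreteCategory.mono_of_injective i W.toSubmodule.injective_subtype
    by_cases hi : i = 0
    · left
      refine eq_bot_iff.2 fun v hv => ?_
      exact congr($hi ⟨v, hv⟩)
    · right
      have := isIso_of_mono_of_nonzero hi
      refine eq_top_iff.2 fun v _ => ?_
      obtain ⟨w, rfl⟩ := (FDRep.isoToLinearEquiv (asIso i)).surjective v
      exact w.2

theorem character_tensorUnit [Monoid G] (g : G) : (𝟙_ (FDRep k G)).character g = 1 :=
  (LinearMap.trace_id k k).trans (by simp)

theorem character_tensorPower [Monoid G] {V : FDRep k G} {P : ℕ → FDRep k G}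
    (hP0 : P 0 = 𝟙_ (FDRep k G)) (hPs : ∀ n, P (n + 1) = V ⊗ P n) (n : ℕ) (g : G) :
    (P n).character g = V.character g ^ n := by
  induction n with
  | zero => rw [hP0, character_tensorUnit, pow_zero]
  | succ n ih => rw [hPs, FDRep.char_tensor, Pi.mul_apply, ih, pow_succ']

theorem card_mul_finrank_invariants_eq_sum_character [CharZero k] [Group G] [Fintype G]
    (V : FDRep k G) :
    (Nat.card G * Module.finrank k (invariants V.ρ) : k) = ∑ g, V.character g := by
  have hcard : (Nat.card G : k) ≠ 0 := NeZero.ne _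
  have := invertibleOfNonzero hcard
  rw [← FDRep.average_char_eq_finrank_invariants, mul_inv_cancel_left₀ hcard]

theorem twelve_mul_finrank_invariants_tensorPower [CharZero k]
    {V : FDRep k (alternatingGroup (Fin 4))} [Simple V] (hdim : Module.finrank k V = 3)
    {P : ℕ → FDRep k (alternatingGroup (Fin 4))}
    (hP0 : P 0 = 𝟙_ (FDRep k (alternatingGroup (Fin 4)))) (hPs : ∀ n, P (n + 1) = V ⊗ P n)
    (n : ℕ) :
    (12 * Module.finrank k (invariants (P n).ρ) : ℤ) = 3 ^ n + 3 * (-1) ^ n + 8 * 0 ^ n := by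
  have := isIrreducible_of_simple V
  have h : (12 * Module.finrank k (invariants (P n).ρ) : k) =
      3 ^ n + 3 * (-1) ^ n + 8 * 0 ^ n :=
    calc
      (12 * Module.finrank k (invariants (P n).ρ) : k) = ∑ g, (P n).character g := by
        rw [← card_mul_finrank_invariants_eq_sum_character,
          alternatingGroup.card_of_card_eq_four (Nat.card_fin 4), Nat.cast_ofNat]
      _ = ∑ g, Representation.character V.ρ g ^ n :=
        Finset.sum_congr rfl fun g _ => character_tensorPower hP0 hPs n g
      _ = 3 ^ n + 3 * (-1) ^ n + 8 * 0 ^ n := sum_character_pow_of_finrank_eq_three hdim n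
  exact_mod_cast h

end FDRep

theorem mk_pow_mul_one_sub_C_mul_X {R : Type*} [CommRing R] (a : R) :
    PowerSeries.mk (fun n => a ^ n) * (1 - C a * X) = 1 := by
  simpa [rescale_mk] using congrArg (rescale a) (mk_one_mul_one_sub_eq_one R)

theorem mk_eq_of_twelve_mul_eq {d : ℕ → ℚ}
    (hd : ∀ n, 12 * d n = 3 ^ n + 3 * (-1) ^ n + 8 * 0 ^ n) :
    PowerSeries.mk d = (1 - 2 * X - 2 * X ^ 2) * ((1 - 3 * X) * (1 + X))⁻¹ := by
  let geom (a : ℚ) : ℚ⟦X⟧ := .mk fun n => a ^ n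
  have hgeom (a : ℚ) : geom a * (1 - C a * X) = 1 := mk_pow_mul_one_sub_C_mul_X a
  have hsum : C 12 * PowerSeries.mk d = geom 3 + C 3 * geom (-1) + C 8 * geom 0 := by
    ext n
    simp only [map_add, coeff_C_mul, coeff_mk, geom, hd]
  have h₃ := hgeom 3
  have h₁ := hgeom (-1)
  have h₀ := hgeom 0
  have h₁₂ : (C 12 : ℚ⟦X⟧) ≠ 0 := by simp
  simp only [map_ofNat, map_neg, map_one, map_zero] at hsum h₃ h₁ h₀ h₁₂
  rw [PowerSeries.eq_mul_inv_iff_mul_eq (by simp)]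
  refine mul_left_cancel₀ h₁₂ ?_
  linear_combination (1 - 3 * X) * (1 + X) * hsum + (1 + X) * h₃ + 3 * (1 - 3 * X) * h₁ +
    8 * (1 - 3 * X) * (1 + X) * h₀

theorem poincare_series_A4_general {k : Type*} [Field k] [CharZero k]
    (V : FDRep k (alternatingGroup (Fin 4))) (hsimple : Simple V)
    (hdim : Module.finrank k V = 3) (P : ℕ → FDRep k (alternatingGroup (Fin 4)))
    (hP0 : P 0 = 𝟙_ (FDRep k (alternatingGroup (Fin 4)))) (hPs : ∀ n, P (n + 1) = V ⊗ P n) :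
    (PowerSeries.mk fun n => (Module.finrank k (Representation.invariants (P n).ρ) : ℚ)) =
      (1 - 2 * (PowerSeries.X : PowerSeries ℚ) - 2 * PowerSeries.X ^ 2) *
        ((1 - 3 * (PowerSeries.X : PowerSeries ℚ)) * (1 + PowerSeries.X))⁻¹ := by
  refine mk_eq_of_twelve_mul_eq fun n => ?_
  have h := congrArg (Int.cast (R := ℚ)) (twelve_mul_finrank_invariants_tensorPower hdim hP0 hPs n)
  push_cast at h
  exact h

/-- For the pair `A₄ ⊴ S₄` with `V` the 3-dimensional irreducible `A₄`-module (the
restriction of the standard `S₄`-module), the Poincaré series of `A₄`-invariants in the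
tensor algebra `T(V)` equals `(1 - 2t - 2t²)/((1 - 3t)(1 + t))` in `ℚ[[t]]`. -/
theorem poincare_series_A4 (V : FDRep ℂ (alternatingGroup (Fin 4)))
    (hsimple : Simple V) (hdim : Module.finrank ℂ V = 3)
    (P : ℕ → FDRep ℂ (alternatingGroup (Fin 4)))
    (hP0 : P 0 = 𝟙_ (FDRep ℂ (alternatingGroup (Fin 4))))
    (hPs : ∀ k, P (k + 1) = V ⊗ P k) :
    (PowerSeries.mk fun k => (Module.finrank ℂ (Representation.invariants (P k).ρ) : ℚ)) =
      (1 - 2 * (PowerSeries.X : PowerSeries ℚ) - 2 * PowerSeries.X ^ 2) *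
        ((1 - 3 * (PowerSeries.X : PowerSeries ℚ)) * (1 + PowerSeries.X))⁻¹ :=
  poincare_series_A4_general V hsimple hdim P hP0 hPs
end
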